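/- Let n ≥ 2, let Q be an n×n Laplacian matrix, let ζ = diag(Q†), r = (1/2)·Q·ζ + u/n, R² = (1/2)·ζᵀ·(r + u/n), and let Ω be the matrix with entries Ω i j = ζ_i + ζ_j − 2(Q†) i j. Then R² > 0, Ω is invertible, and Ω⁻¹ = −(1/2)·(Q − r·rᵀ/R²). -/

import Mathlib

open Matrix

/-- A Laplacian matrix: symmetric, nonpositive off-diagonal entries, zero row sums,
and irreducible. -/
def IsLaplacian {m : Type*} [Fintype m] [DecidableEq m] (Q : Matrix m m ℝ) : Prop :=
  Q.IsSymm ∧ (∀ i j, i ≠ j → Q i j ≤ 0) ∧ (Q *ᵥ (fun _ => (1 : ℝ)) = 0) ∧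
  ∀ V : Finset m, V.Nonempty → V ≠ Finset.univ → ∃ i ∈ V, ∃ j ∉ V, Q i j ≠ 0

/-- `B` is the Moore–Penrose pseudoinverse of `A`. -/
def IsMoorePenrose {k l : Type*} [Fintype k] [Fintype l]
    (A : Matrix k l ℝ) (B : Matrix l k ℝ) : Prop :=
  A * B * A = A ∧ B * A * B = B ∧ (A * B)ᵀ = A * B ∧ (B * A)ᵀ = B * A

/-!
The quadratic form of a Laplacian is the Dirichlet energy `-½ ∑ i j, Q i j * (x i - x j) ^ 2`, so
`Q` is positive semidefinite and, by irreducibility, its kernel is spanned by `1`.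

Since `1 - Q† * Q` is the symmetric projection onto `ker Q`, it is `1 1ᵀ / n`. Multiplying out
`Ω = ζ 1ᵀ + 1 ζᵀ - 2 Q†` then gives `Ω * Q = 2 (1 rᵀ - I)` and `Ω r = 2 R² 1`, whence
`Ω * (Q - r rᵀ / R²) = -2 I`. Finally `R² = ¼ ζᵀ Q ζ + tr Q† / n`, where the first term is
nonnegative and the second is positive because `Q†` is positive semidefinite and nonzero.
-/

variable {k l m : Type*} [Fintype l] [Fintype m]

theorem two_mul_dotProduct_mulVec_self_eq_neg_sum_sq_sub {R : Type*} [CommRing R] {Q : Matrix m m R}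
    (hQ : Q.IsSymm) (hQ1 : Q *ᵥ 1 = 0) (x : m → R) :
    2 * (x ⬝ᵥ Q *ᵥ x) = -∑ i, ∑ j, Q i j * (x i - x j) ^ 2 := by
  have row_sum (i : m) : ∑ j, Q i j = 0 := by
    simpa [mulVec, dotProduct_one] using congrFun hQ1 i
  have sum_sq_left : ∑ i, ∑ j, Q i j * x i ^ 2 = 0 := by
    simp [← Finset.sum_mul, row_sum]
  have sum_sq_right : ∑ i, ∑ j, Q i j * x j ^ 2 = 0 := by
    rw [Finset.sum_comm]
    simpa only [hQ.apply] using sum_sq_left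
  have sum_mul : x ⬝ᵥ Q *ᵥ x = ∑ i, ∑ j, Q i j * (x i * x j) := by
    simp only [dotProduct, mulVec, Finset.mul_sum, mul_left_comm]
  have expand (i j : m) : Q i j * (x i - x j) ^ 2 =
      Q i j * x i ^ 2 + Q i j * x j ^ 2 - 2 * (Q i j * (x i * x j)) := by ring
  simp only [expand, Finset.sum_sub_distrib, Finset.sum_add_distrib, sum_sq_left, sum_sq_right,
    ← Finset.mul_sum, ← sum_mul]
  ring

theorem one_dotProduct_mulVec_eq_zero {R : Type*} [CommSemiring R] {Q : Matrix m m R}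
    (hQ : Q.IsSymm) (hQ1 : Q *ᵥ 1 = 0) (x : m → R) : 1 ⬝ᵥ Q *ᵥ x = 0 := by
  rw [dotProduct_mulVec, ← mulVec_transpose, hQ.eq, hQ1, zero_dotProduct]

theorem mulVec_one_eq_zero_of_ker {A : Matrix k l ℝ}
    (hA : LinearMap.ker A.mulVecLin = ℝ ∙ (1 : l → ℝ)) : A *ᵥ 1 = 0 :=
  LinearMap.mem_ker.1 (hA ▸ Submodule.mem_span_singleton_self 1)

namespace IsLaplacian

variable [DecidableEq m] {Q : Matrix m m ℝ}

theorem mulVec_one_eq_zero (hQ : IsLaplacian Q) : Q *ᵥ 1 = 0 := hQ.2.2.1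

theorem mul_sq_sub_nonpos (hQ : IsLaplacian Q) (x : m → ℝ) (i j : m) :
    Q i j * (x i - x j) ^ 2 ≤ 0 := by
  rcases eq_or_ne i j with rfl | hij
  · simp
  · exact mul_nonpos_of_nonpos_of_nonneg (hQ.2.1 i j hij) (sq_nonneg _)

theorem posSemidef (hQ : IsLaplacian Q) : Q.PosSemidef := by
  refine .of_dotProduct_mulVec_nonneg hQ.1 fun x ↦ ?_
  have energy := two_mul_dotProduct_mulVec_self_eq_neg_sum_sq_sub hQ.1 hQ.mulVec_one_eq_zero x
  have energy_nonpos : ∑ i, ∑ j, Q i j * (x i - x j) ^ 2 ≤ 0 :=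
    Finset.sum_nonpos fun i _ ↦ Finset.sum_nonpos fun j _ ↦ hQ.mul_sq_sub_nonpos x i j
  rw [star_trivial]
  linarith

theorem eq_of_mulVec_eq_zero_of_ne_zero (hQ : IsLaplacian Q) {x : m → ℝ} (hx : Q *ᵥ x = 0)
    {i j : m} (hij : Q i j ≠ 0) : x i = x j := by
  have energy := two_mul_dotProduct_mulVec_self_eq_neg_sum_sq_sub hQ.1 hQ.mulVec_one_eq_zero x
  rw [hx, dotProduct_zero, mul_zero, zero_eq_neg, Finset.sum_eq_zero_iff_of_nonpos
    fun i _ ↦ Finset.sum_nonpos fun j _ ↦ hQ.mul_sq_sub_nonpos x i j] at energy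
  have term : Q i j * (x i - x j) ^ 2 = 0 :=
    (Finset.sum_eq_zero_iff_of_nonpos fun j _ ↦ hQ.mul_sq_sub_nonpos x i j).1
      (energy i (Finset.mem_univ i)) j (Finset.mem_univ j)
  simpa [hij, sub_eq_zero] using term

theorem eq_of_mulVec_eq_zero (hQ : IsLaplacian Q) {x : m → ℝ} (hx : Q *ᵥ x = 0) (i j : m) :
    x i = x j := by
  by_contra hij
  obtain ⟨a, ha, b, hb, hab⟩ := hQ.2.2.2 {a | x a = x j} ⟨j, by simp⟩
    fun h ↦ hij (by simpa using h.ge (Finset.mem_univ i))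
  have hxab := hQ.eq_of_mulVec_eq_zero_of_ne_zero hx hab
  simp only [Finset.mem_filter_univ] at ha hb
  exact hb (hxab ▸ ha)

theorem ker_mulVecLin (hQ : IsLaplacian Q) : LinearMap.ker Q.mulVecLin = ℝ ∙ (1 : m → ℝ) := by
  ext x
  rw [LinearMap.mem_ker, mulVecLin_apply, Submodule.mem_span_singleton]
  constructor
  · intro hx
    rcases isEmpty_or_nonempty m with _ | ⟨⟨j⟩⟩
    · exact ⟨0, Subsingleton.elim _ _⟩
    · exact ⟨x j, funext fun i ↦ by simp [hQ.eq_of_mulVec_eq_zero hx i j]⟩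
  · rintro ⟨c, rfl⟩
    rw [mulVec_smul, hQ.mulVec_one_eq_zero, smul_zero]

end IsLaplacian

namespace IsMoorePenrose

variable [Fintype k] {A : Matrix k l ℝ} {B C : Matrix l k ℝ} {S T : Matrix m m ℝ}

protected theorem transpose (h : IsMoorePenrose A B) : IsMoorePenrose Aᵀ Bᵀ := by
  obtain ⟨hABA, hBAB, hAB, hBA⟩ := h
  simp only [IsMoorePenrose, ← transpose_mul, Matrix.mul_assoc] at hABA hBAB ⊢
  exact ⟨congrArg transpose hABA, congrArg transpose hBAB, congrArg transpose hBA,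
    congrArg transpose hAB⟩

theorem mul_eq_mul (hB : IsMoorePenrose A B) (hC : IsMoorePenrose A C) : A * B = A * C :=
  calc A * B = (A * C * (A * B))ᵀᵀ := by
        rw [transpose_transpose, ← Matrix.mul_assoc, hC.1]
    _ = (A * B * A * C)ᵀ := by
        rw [transpose_mul, hB.2.2.1, hC.2.2.1, Matrix.mul_assoc (A * B)]
    _ = A * C := by rw [hB.1, hC.2.2.1]

protected theorem unique (hB : IsMoorePenrose A B) (hC : IsMoorePenrose A C) : B = C := by
  have hBA : B * A = C * A := by
    simpa only [← transpose_mul, transpose_inj] using hB.transpose.mul_eq_mul hC.transpose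
  rw [← hB.2.1, hBA, Matrix.mul_assoc, hB.mul_eq_mul hC, ← Matrix.mul_assoc, hC.2.1]

theorem isSymm (h : IsMoorePenrose S T) (hS : S.IsSymm) : T.IsSymm := by
  have hT := h.transpose
  rw [hS.eq] at hT
  exact hT.unique h

theorem posSemidef (h : IsMoorePenrose S T) (hS : S.PosSemidef) : T.PosSemidef := by
  have hT := hS.conjTranspose_mul_mul_same T
  rwa [conjTranspose_eq_transpose_of_trivial, (h.isSymm hS.isHermitian).eq, h.2.1] at hT

theorem commute (h : IsMoorePenrose S T) (hS : S.IsSymm) : Commute S T := by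
  rw [Commute, SemiconjBy, ← h.2.2.1, transpose_mul, hS.eq, (h.isSymm hS).eq]

theorem mulVec_eq_zero (h : IsMoorePenrose S T) (hS : S.IsSymm) {x : m → ℝ}
    (hx : S *ᵥ x = 0) : T *ᵥ x = 0 := by
  rw [← h.2.1, Matrix.mul_assoc, (h.commute hS).eq, ← mulVec_mulVec, ← mulVec_mulVec, hx,
    mulVec_zero, mulVec_zero]

theorem mul_mulVec_of_ker (h : IsMoorePenrose A B)
    (hA : LinearMap.ker A.mulVecLin = ℝ ∙ (1 : l → ℝ)) (x : l → ℝ) :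
    (B * A) *ᵥ x = x - ((Fintype.card l : ℝ)⁻¹ * (1 ⬝ᵥ x)) • 1 := by
  have hA1 : A *ᵥ 1 = 0 := mulVec_one_eq_zero_of_ker hA
  obtain ⟨c, hc⟩ : ∃ c : ℝ, c • 1 = x - (B * A) *ᵥ x := by
    rw [← Submodule.mem_span_singleton, ← hA]
    simp [mulVec_sub, ← Matrix.mul_assoc, h.1]
  have orthogonal : 1 ⬝ᵥ (B * A) *ᵥ x = 0 :=
    one_dotProduct_mulVec_eq_zero h.2.2.2 (by rw [← mulVec_mulVec, hA1, mulVec_zero]) x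
  have card_mul : Fintype.card l * c = 1 ⬝ᵥ x := by
    simpa [dotProduct_sub, orthogonal, mul_comm] using congrArg (1 ⬝ᵥ ·) hc
  rcases isEmpty_or_nonempty l with _ | _
  · exact Subsingleton.elim _ _
  · rw [← card_mul, inv_mul_cancel_left₀ (by simp), hc, sub_sub_cancel]

theorem ne_zero_of_ker [Nontrivial l] (h : IsMoorePenrose A B)
    (hA : LinearMap.ker A.mulVecLin = ℝ ∙ (1 : l → ℝ)) : B ≠ 0 := by
  classical
  rintro rfl
  obtain ⟨i, j, hij⟩ := exists_pair_ne l
  have single_mem : Pi.single i 1 ∈ ℝ ∙ (1 : l → ℝ) := by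
    rw [← hA, ← h.1]
    simp
  obtain ⟨c, hc⟩ := Submodule.mem_span_singleton.1 single_mem
  have hci : c = 1 := by simpa using congrFun hc i
  have hcj : c = 0 := by simpa [hij.symm] using congrFun hc j
  exact one_ne_zero (hci.symm.trans hcj)

end IsMoorePenrose

/-- The squared distances `‖pᵢ - pⱼ‖²` between points with Gram matrix `G`. If `G` is the
pseudoinverse of a Laplacian, these are the effective resistances, so this is `Ω`. -/
def resistanceMatrix (G : Matrix m m ℝ) : Matrix m m ℝ :=
  of fun i j ↦ G i i + G j j - 2 * G i j

/-- The vector `r` of barycentric coordinates of the circumcenter of the simplex whose Gram matrix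
with respect to the centroid is the pseudoinverse `G` of `Q`. -/
noncomputable def circumcenter (Q G : Matrix m m ℝ) : m → ℝ :=
  (1 / 2 : ℝ) • Q *ᵥ G.diag + (Fintype.card m : ℝ)⁻¹ • 1

/-- The squared circumradius `R²` of the simplex whose Gram matrix with respect to the centroid is
the pseudoinverse `G` of `Q`. -/
noncomputable def circumradiusSq (Q G : Matrix m m ℝ) : ℝ :=
  (1 / 2 : ℝ) * (G.diag ⬝ᵥ (circumcenter Q G + (Fintype.card m : ℝ)⁻¹ • 1))

section Simplex

variable {Q G : Matrix m m ℝ}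

theorem resistanceMatrix_mulVec (G : Matrix m m ℝ) (x : m → ℝ) :
    resistanceMatrix G *ᵥ x = (1 ⬝ᵥ x) • G.diag + (G.diag ⬝ᵥ x) • 1 - (2 : ℝ) • G *ᵥ x := by
  have decomposition :
      resistanceMatrix G = vecMulVec G.diag 1 + vecMulVec 1 G.diag - (2 : ℝ) • G := by
    ext i j
    simp [resistanceMatrix]
  simp only [decomposition, sub_mulVec, add_mulVec, vecMulVec_mulVec, smul_mulVec, op_smul_eq_smul]

theorem one_dotProduct_circumcenter [Nonempty m] (hQ : Q.IsSymm) (hQ1 : Q *ᵥ 1 = 0)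
    (G : Matrix m m ℝ) : 1 ⬝ᵥ circumcenter Q G = 1 := by
  simp [circumcenter, dotProduct_add, one_dotProduct_mulVec_eq_zero hQ hQ1]

theorem circumradiusSq_eq (Q G : Matrix m m ℝ) :
    circumradiusSq Q G =
      (1 / 4 : ℝ) * (G.diag ⬝ᵥ Q *ᵥ G.diag) + (Fintype.card m : ℝ)⁻¹ * G.trace := by
  simp only [circumradiusSq, circumcenter, dotProduct_add, dotProduct_smul, dotProduct_one,
    smul_eq_mul, trace]
  ring

theorem circumradiusSq_pos (hQ : Q.PosSemidef) (hG : G.PosSemidef) (hG0 : G ≠ 0) :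
    0 < circumradiusSq Q G := by
  have : Nonempty m := not_isEmpty_iff.1 fun _ ↦ hG0 (Subsingleton.elim _ _)
  have energy_nonneg : 0 ≤ G.diag ⬝ᵥ Q *ᵥ G.diag := hQ.dotProduct_mulVec_nonneg G.diag
  have trace_pos : 0 < G.trace := hG.trace_nonneg.lt_of_ne' (hG.trace_eq_zero_iff.not.2 hG0)
  rw [circumradiusSq_eq]
  positivity

end Simplex

namespace IsMoorePenrose

variable {Q G : Matrix m m ℝ}

theorem resistanceMatrix_mulVec_mulVec (h : IsMoorePenrose Q G) (hQ : Q.IsSymm)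
    (hker : LinearMap.ker Q.mulVecLin = ℝ ∙ (1 : m → ℝ)) (x : m → ℝ) :
    resistanceMatrix G *ᵥ Q *ᵥ x = (2 : ℝ) • ((circumcenter Q G ⬝ᵥ x) • 1 - x) := by
  have hQ1 : Q *ᵥ 1 = 0 := mulVec_one_eq_zero_of_ker hker
  have dot_circumcenter : circumcenter Q G ⬝ᵥ x =
      (1 / 2 : ℝ) * (G.diag ⬝ᵥ Q *ᵥ x) + (Fintype.card m : ℝ)⁻¹ * (1 ⬝ᵥ x) := by
    rw [circumcenter, add_dotProduct, smul_dotProduct, smul_dotProduct, dotProduct_mulVec,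
      ← mulVec_transpose, hQ.eq, smul_eq_mul, smul_eq_mul]
  rw [resistanceMatrix_mulVec, one_dotProduct_mulVec_eq_zero hQ hQ1, mulVec_mulVec,
    h.mul_mulVec_of_ker hker, dot_circumcenter]
  module

theorem resistanceMatrix_mulVec_circumcenter (h : IsMoorePenrose Q G) (hQ : Q.IsSymm)
    (hker : LinearMap.ker Q.mulVecLin = ℝ ∙ (1 : m → ℝ)) :
    resistanceMatrix G *ᵥ circumcenter Q G = (2 * circumradiusSq Q G) • 1 := by
  cases isEmpty_or_nonempty m
  · exact Subsingleton.elim _ _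
  have hQ1 : Q *ᵥ 1 = 0 := mulVec_one_eq_zero_of_ker hker
  have gram_mulVec : G *ᵥ circumcenter Q G =
      (1 / 2 : ℝ) • (G.diag - ((Fintype.card m : ℝ)⁻¹ * (1 ⬝ᵥ G.diag)) • 1) := by
    rw [circumcenter, mulVec_add, mulVec_smul, mulVec_smul, mulVec_mulVec,
      h.mul_mulVec_of_ker hker, h.mulVec_eq_zero hQ hQ1, smul_zero, add_zero]
  rw [resistanceMatrix_mulVec, one_dotProduct_circumcenter hQ hQ1, gram_mulVec, circumradiusSq,
    dotProduct_add, dotProduct_smul, dotProduct_comm 1, smul_eq_mul]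
  module

theorem resistanceMatrix_mul_eq_one [DecidableEq m] (h : IsMoorePenrose Q G) (hQ : Q.IsSymm)
    (hker : LinearMap.ker Q.mulVecLin = ℝ ∙ (1 : m → ℝ)) (hR : circumradiusSq Q G ≠ 0) :
    resistanceMatrix G * ((-(1 / 2) : ℝ) • (Q - (circumradiusSq Q G)⁻¹ •
      vecMulVec (circumcenter Q G) (circumcenter Q G))) = 1 := by
  refine ext_of_mulVec_single fun i ↦ ?_
  rw [← mulVec_mulVec, smul_mulVec, sub_mulVec, smul_mulVec, vecMulVec_mulVec, op_smul_eq_smul,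
    mulVec_smul, mulVec_sub, mulVec_smul, mulVec_smul, h.resistanceMatrix_mulVec_mulVec hQ hker,
    h.resistanceMatrix_mulVec_circumcenter hQ hker, one_mulVec]
  match_scalars <;> field

end IsMoorePenrose

theorem stmt_10_general [DecidableEq m] [Nontrivial m] {Q G : Matrix m m ℝ} (hQ : Q.PosSemidef)
    (hker : LinearMap.ker Q.mulVecLin = ℝ ∙ (1 : m → ℝ)) (hG : IsMoorePenrose Q G) :
    0 < circumradiusSq Q G ∧ IsUnit (resistanceMatrix G).det ∧
    (resistanceMatrix G)⁻¹ = (-(1 / 2) : ℝ) • (Q - (circumradiusSq Q G)⁻¹ •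
      vecMulVec (circumcenter Q G) (circumcenter Q G)) := by
  have radius_pos := circumradiusSq_pos hQ (hG.posSemidef hQ) (hG.ne_zero_of_ker hker)
  have right_inverse := hG.resistanceMatrix_mul_eq_one hQ.isHermitian hker radius_pos.ne'
  exact ⟨radius_pos, isUnit_det_of_right_inverse right_inverse, inv_eq_right_inv right_inverse⟩

theorem stmt_10 {n : ℕ} (hn : 2 ≤ n) (Q : Matrix (Fin n) (Fin n) ℝ)
    (hQ : IsLaplacian Q)
    (Qd : Matrix (Fin n) (Fin n) ℝ) (hQd : IsMoorePenrose Q Qd)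
    (ζ : Fin n → ℝ) (hζ : ∀ i, ζ i = Qd i i)
    (r : Fin n → ℝ)
    (hr : r = (1 / 2 : ℝ) • (Q *ᵥ ζ) + (n : ℝ)⁻¹ • (fun _ => (1 : ℝ)))
    (R2 : ℝ)
    (hR2 : R2 = (1 / 2 : ℝ) * (ζ ⬝ᵥ (r + (n : ℝ)⁻¹ • (fun _ => (1 : ℝ)))))
    (Ω : Matrix (Fin n) (Fin n) ℝ)
    (hΩ : ∀ i j, Ω i j = ζ i + ζ j - 2 * Qd i j) :
    0 < R2 ∧ IsUnit Ω.det ∧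
    Ω⁻¹ = (-(1 / 2) : ℝ) • (Q - R2⁻¹ • Matrix.vecMulVec r r) := by
  have : Nontrivial (Fin n) := Fin.nontrivial_iff_two_le.2 hn
  obtain rfl : ζ = Qd.diag := funext hζ
  obtain rfl : Ω = resistanceMatrix Qd := ext hΩ
  simpa only [hR2, hr, circumradiusSq, circumcenter, Fintype.card_fin] using!
    stmt_10_general hQ.posSemidef hQ.ker_mulVecLin hQd
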